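/- For every complex s with Re(s) > 1, ∑'_{(m,k)} [ 1/(m² + 15k²)^s − 1/(3m² + 5k²)^s ] = 2·(1 + 2^{1−2s} + 2^{1−s})·L(χ_{-3}, s)·L(χ_5, s). -/

import Mathlib

/-- The quadratic Dirichlet character modulo 3:
`χ₋₃(n) = 1` if `n ≡ 1 (mod 3)`, `-1` if `n ≡ 2 (mod 3)`, `0` if `3 ∣ n`. -/
def chiNeg3 (n : ℕ) : ℤ :=
  if n % 3 = 1 then 1 else if n % 3 = 2 then -1 else 0

/-- The quadratic Dirichlet character modulo 5 given by the Legendre symbol `(n/5)`. -/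
def chi5 (n : ℕ) : ℤ :=
  if n % 5 = 1 ∨ n % 5 = 4 then 1 else if n % 5 = 2 ∨ n % 5 = 3 then -1 else 0

/-- The quadratic Dirichlet character modulo 15, `χ₋₁₅(n) = (n/3)·(n/5)`. -/
def chiNeg15 (n : ℕ) : ℤ := chiNeg3 n * chi5 n

/-- The Dirichlet `L`-series `L(χ, s) = ∑_{n ≥ 1} χ(n) n^{-s}`. -/
noncomputable def LSer (χ : ℕ → ℤ) (s : ℂ) : ℂ :=
  ∑' n : ℕ, (χ (n + 1) : ℂ) / ((n : ℂ) + 1) ^ s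

/-! Both forms have discriminant `-60`, so their representation numbers are first compared with
those of the two reduced forms `x² + xy + 4y²` and `2x² + xy + 2y²` of discriminant `-15`; this
is a purely 2-adic matter and accounts for the factor `1 + 2^{1-2s} + 2^{1-s}`.

The discriminant `-15` has two classes, one in each genus, and the genus of a form is detected by
the characters modulo `3` and `5` of the values it takes. Counting the representations of `p n` by a
form through its neighbours at `p`, the sublattices of index `p` on which it is divisible by `p`,
shows that the difference of the two representation numbers is a Hecke eigenfunction whose
eigenvalue at `p` is `χ₋₃(p) + χ₅(p)`. It is therefore twice the Dirichlet convolution of the two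
characters, and its Dirichlet series is `2 L(χ₋₃, s) L(χ₅, s)`. -/

/-- The integral binary quadratic form `a x² + b x y + c y²`, usually written `[a, b, c]`. -/
structure BinaryForm where
  a : ℤ
  b : ℤ
  c : ℤ

namespace BinaryForm

variable (f g : BinaryForm)

/-- The value of a form at an integral vector. -/
def eval (v : ℤ × ℤ) : ℤ := f.a * v.1 ^ 2 + f.b * v.1 * v.2 + f.c * v.2 ^ 2

/-- The discriminant `b² - 4ac`. -/
def disc : ℤ := discrim f.a f.b f.c

/-- The set of representations of `n` by a form. -/
def reps (n : ℕ) : Set (ℤ × ℤ) := {v | f.eval v = n}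

/-- The representation number `r_f(n)`. For definite forms `reps` is finite (`finite_reps`); for
infinite `reps` the value is `0`. -/
noncomputable def repCount (n : ℕ) : ℕ := (f.reps n).ncard

@[simp]
theorem mem_reps {n : ℕ} {v : ℤ × ℤ} : v ∈ f.reps n ↔ f.eval v = n := Iff.rfl

theorem four_mul_eval_mul_eval (v w : ℤ × ℤ) :
    4 * (f.eval v * f.eval w) =
      (2 * f.a * v.1 * w.1 + f.b * (v.1 * w.2 + v.2 * w.1) + 2 * f.c * v.2 * w.2) ^ 2 -
        f.disc * (v.1 * w.2 - v.2 * w.1) ^ 2 := by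
  simp only [eval, disc, discrim]
  ring

section Definite

variable {f}

theorem sq_fst_le (hD : f.disc < 0) (v : ℤ × ℤ) : v.1 ^ 2 ≤ 4 * f.c * f.eval v := by
  have h := f.four_mul_eval_mul_eval v (0, 1)
  have hc : f.eval (0, 1) = f.c := by simp [eval]
  rw [hc] at h
  simp only [mul_zero, mul_one, zero_add, add_zero, sub_zero] at h
  nlinarith [sq_nonneg (f.b * v.1 + 2 * f.c * v.2), sq_nonneg v.1]

theorem sq_snd_le (hD : f.disc < 0) (v : ℤ × ℤ) : v.2 ^ 2 ≤ 4 * f.a * f.eval v := by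
  have h := f.four_mul_eval_mul_eval v (1, 0)
  have ha : f.eval (1, 0) = f.a := by simp [eval]
  rw [ha] at h
  simp only [mul_zero, mul_one, zero_add, add_zero, zero_sub] at h
  nlinarith [sq_nonneg (2 * f.a * v.1 + f.b * v.2), sq_nonneg v.2]

theorem c_pos (ha : 0 < f.a) (hD : f.disc < 0) : 0 < f.c := by
  simp only [disc, discrim] at hD
  nlinarith [sq_nonneg f.b]

theorem eval_pos (ha : 0 < f.a) (hD : f.disc < 0) {v : ℤ × ℤ} (hv : v ≠ 0) : 0 < f.eval v := by
  by_contra! h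
  have hx := sq_fst_le hD v
  have hy := sq_snd_le hD v
  have hc := c_pos ha hD
  refine hv (Prod.ext ?_ ?_) <;> refine pow_eq_zero_iff two_ne_zero |>.1 ?_ <;> nlinarith

theorem eval_nonneg (ha : 0 < f.a) (hD : f.disc < 0) (v : ℤ × ℤ) : 0 ≤ f.eval v := by
  rcases eq_or_ne v 0 with rfl | hv
  · simp [eval]
  · exact (eval_pos ha hD hv).le

theorem finite_reps (hD : f.disc < 0) (n : ℕ) : (f.reps n).Finite := by
  refine ((Set.finite_Icc (-(4 * f.c * n)) (4 * f.c * n)).prod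
    (Set.finite_Icc (-(4 * f.a * n)) (4 * f.a * n))).subset fun v hv => ?_
  have hx := sq_fst_le hD v
  have hy := sq_snd_le hD v
  rw [hv] at hx hy
  have mem_Icc_of_sq_le {z B : ℤ} (h : z ^ 2 ≤ B) : z ∈ Set.Icc (-B) B :=
    abs_le.1 ((abs_le'.2 ⟨Int.le_self_sq z, neg_sq z ▸ Int.le_self_sq (-z)⟩).trans h)
  exact ⟨mem_Icc_of_sq_le hx, mem_Icc_of_sq_le hy⟩

end Definite

variable {f g} in
theorem ncard_reps_inter_range {φ : ℤ × ℤ → ℤ × ℤ} (hφ : φ.Injective) {m n : ℕ}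
    (h : ∀ v, f.eval (φ v) = n ↔ g.eval v = m) :
    (f.reps n ∩ Set.range φ).ncard = g.repCount m := by
  have hpre : φ ⁻¹' f.reps n = g.reps m := Set.ext h
  rw [← Set.image_preimage_eq_inter_range, hpre, Set.ncard_image_of_injective _ hφ, repCount]

variable {f g} in
theorem repCount_eq_of_reps_subset_range {φ : ℤ × ℤ → ℤ × ℤ} (hφ : φ.Injective)
    (h : ∀ v, f.eval (φ v) = g.eval v) {n : ℕ} (hn : f.reps n ⊆ Set.range φ) :
    f.repCount n = g.repCount n := by
  have hcard := ncard_reps_inter_range (m := n) (n := n) hφ fun v => by rw [h v]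
  rwa [Set.inter_eq_left.2 hn] at hcard

/-! ### Equivalence and reduction -/

/-- Equivalence under `GL₂(ℤ)`, the group of additive automorphisms of `ℤ²`. It is coarser than the
classical proper equivalence, but representation numbers do not see the difference. -/
def IsEquiv : Prop := ∃ e : (ℤ × ℤ) ≃+ (ℤ × ℤ), ∀ v, f.eval (e v) = g.eval v

namespace IsEquiv

variable {f g} {h : BinaryForm}

theorem trans : f.IsEquiv g → g.IsEquiv h → f.IsEquiv h
  | ⟨e, he⟩, ⟨e', he'⟩ => ⟨e'.trans e, fun v => (he (e' v)).trans (he' v)⟩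

theorem repCount_eq (hfg : f.IsEquiv g) (n : ℕ) : f.repCount n = g.repCount n := by
  obtain ⟨e, he⟩ := hfg
  refine repCount_eq_of_reps_subset_range e.injective he ?_
  exact e.surjective.range_eq ▸ Set.subset_univ _

theorem exists_eval_eq (hfg : f.IsEquiv g) (v : ℤ × ℤ) : ∃ w, g.eval w = f.eval v := by
  obtain ⟨e, he⟩ := hfg
  exact ⟨e.symm v, by rw [← he, e.apply_symm_apply]⟩

end IsEquiv

theorem isEquiv_swap : f.IsEquiv ⟨f.c, f.b, f.a⟩ := by
  refine ⟨AddEquiv.prodComm, fun v => ?_⟩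
  simp only [eval, AddEquiv.coe_prodComm, Prod.fst_swap, Prod.snd_swap]
  ring

theorem isEquiv_neg : f.IsEquiv ⟨f.a, -f.b, f.c⟩ := by
  refine ⟨(AddEquiv.refl ℤ).prodCongr (AddEquiv.neg ℤ), fun v => ?_⟩
  change f.eval (v.1, -v.2) = _
  simp only [eval]
  ring

theorem isEquiv_shift (k : ℤ) :
    f.IsEquiv ⟨f.a, 2 * f.a * k + f.b, f.eval (k, 1)⟩ :=
  ⟨{ toFun := fun v => (v.1 + k * v.2, v.2)
     invFun := fun v => (v.1 - k * v.2, v.2)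
     left_inv := fun v => by simp
     right_inv := fun v => by simp
     map_add' := fun v w => by ext <;> simp; ring }, fun v => by
    simp only [eval, AddEquiv.coe_mk, Equiv.coe_fn_mk]; ring⟩

theorem disc_shift (k : ℤ) :
    disc ⟨f.a, 2 * f.a * k + f.b, f.eval (k, 1)⟩ = f.disc := by
  simp only [disc, discrim, eval]
  ring

theorem exists_isEquiv_abs_le (ha : 0 < f.a) :
    ∃ g, f.IsEquiv g ∧ g.disc = f.disc ∧ g.a = f.a ∧ |g.b| ≤ g.a := by
  refine ⟨_, f.isEquiv_shift (-((f.b + f.a) / (2 * f.a))), f.disc_shift _, rfl, abs_le.2 ?_⟩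
  have hmod := Int.emod_add_mul_ediv (f.b + f.a) (2 * f.a)
  have hnonneg := Int.emod_nonneg (f.b + f.a) (show 2 * f.a ≠ 0 by lia)
  have hlt := Int.emod_lt_of_pos (f.b + f.a) (show 0 < 2 * f.a by lia)
  constructor <;> linarith

theorem exists_isEquiv_reduced (ha : 0 < f.a) (hD : f.disc < 0) :
    ∃ g, f.IsEquiv g ∧ g.disc = f.disc ∧ 0 ≤ g.b ∧ g.b ≤ g.a ∧ g.a ≤ g.c := by
  induction hN : f.a.toNat using Nat.strong_induction_on generalizing f with
  | _ N ih =>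
    obtain ⟨g, hfg, hgD, hga, hgb⟩ := f.exists_isEquiv_abs_le ha
    rcases lt_or_ge g.c g.a with hca | hac
    · have hc : 0 < g.c := c_pos (hga ▸ ha) (hgD ▸ hD)
      have hswap : disc ⟨g.c, g.b, g.a⟩ = f.disc := by
        rw [← hgD, disc, disc, discrim, discrim]; ring
      obtain ⟨h, hgh, hhD, hred⟩ := ih g.c.toNat (by lia) ⟨g.c, g.b, g.a⟩ hc (hswap ▸ hD) rfl
      exact ⟨h, hfg.trans (g.isEquiv_swap.trans hgh), hhD.trans hswap, hred⟩
    · rcases le_total 0 g.b with hb | hb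
      · exact ⟨g, hfg, hgD, hb, (le_abs_self _).trans hgb, hac⟩
      · refine ⟨_, hfg.trans g.isEquiv_neg, ?_, neg_nonneg.2 hb, (neg_le_abs _).trans hgb, hac⟩
        rw [← hgD, disc, disc, discrim, discrim, neg_sq]

theorem isEquiv_of_disc_eq_neg_fifteen (ha : 0 < f.a) (hD : f.disc = -15) :
    f.IsEquiv ⟨1, 1, 4⟩ ∨ f.IsEquiv ⟨2, 1, 2⟩ := by
  obtain ⟨⟨a, b, c⟩, hfg, hgD, hb, hba, hac⟩ := f.exists_isEquiv_reduced ha (by lia)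
  rw [hD] at hgD
  simp only [disc, discrim] at hgD hb hba hac
  have ha1 : 1 ≤ a := by
    by_contra! h
    obtain ⟨rfl, rfl⟩ : a = 0 ∧ b = 0 := by lia
    lia
  have ha2 : a ≤ 2 := by nlinarith
  have hb2 : b ≤ 2 := hba.trans ha2
  interval_cases a <;> interval_cases b <;> try lia
  · obtain rfl : c = 4 := by lia
    exact Or.inl hfg
  · obtain rfl : c = 2 := by lia
    exact Or.inr hfg

/-! ### Genus characters -/

theorem legendreSym_eval_eq {q : ℕ} [Fact q.Prime] (hq : q ≠ 2) (hqD : (f.disc : ZMod q) = 0)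
    {v w : ℤ × ℤ} (hv : (f.eval v : ZMod q) ≠ 0) (hw : (f.eval w : ZMod q) ≠ 0) :
    legendreSym q (f.eval v) = legendreSym q (f.eval w) := by
  have : NeZero (2 : ZMod q) := ⟨Ring.two_ne_zero (by rwa [ZMod.ringChar_zmod_n])⟩
  have hsq : IsSquare ((f.eval v * f.eval w : ℤ) : ZMod q) := by
    have h := congrArg (Int.cast : ℤ → ZMod q) (f.four_mul_eval_mul_eval v w)
    push_cast [hqD] at h
    rw [zero_mul, sub_zero] at h
    refine ⟨(2 * f.a * v.1 * w.1 + f.b * (v.1 * w.2 + v.2 * w.1) + 2 * f.c * v.2 * w.2) / 2, ?_⟩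
    field_simp
    push_cast
    linear_combination h
  have hprod : legendreSym q (f.eval v) * legendreSym q (f.eval w) = 1 := by
    rw [← legendreSym.mul, legendreSym.eq_one_iff _ (by push_cast; exact mul_ne_zero hv hw)]
    exact hsq
  exact Int.eq_of_mul_eq_one hprod

/-! ### Representations of `p n` -/

theorem repCount_scale {k : ℕ} (hk : k ≠ 0) (n : ℕ) :
    repCount ⟨k * f.a, k * f.b, k * f.c⟩ n = if k ∣ n then f.repCount (n / k) else 0 := by
  have heval (v : ℤ × ℤ) : eval ⟨k * f.a, k * f.b, k * f.c⟩ v = k * f.eval v := by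
    simp only [eval]
    ring
  split_ifs with hkn
  · obtain ⟨m, rfl⟩ := hkn
    rw [Nat.mul_div_cancel_left _ (Nat.pos_of_ne_zero hk), repCount, repCount]
    congr 1 with v
    rw [mem_reps, mem_reps, heval, Nat.cast_mul, mul_right_inj' (Nat.cast_ne_zero.2 hk)]
  · refine (congrArg Set.ncard (Set.eq_empty_of_forall_notMem fun v hv => hkn ?_)).trans
      (Set.ncard_empty _)
    exact Int.natCast_dvd_natCast.1 ⟨f.eval v, hv.symm.trans (heval v)⟩

/-- If `p ∣ f(r, 1)`, then `f(r y + p x, y) = p g(x, y)` for this form `g` of the same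
discriminant; it is the neighbour of `f` at the root `r` of `f(x, 1)` modulo `p`. -/
def neighbor (p : ℕ) (r : ℤ) : BinaryForm := ⟨f.a * p, 2 * f.a * r + f.b, f.eval (r, 1) / p⟩

section Neighbor

variable {f} {p : ℕ} {r : ℤ}

theorem disc_neighbor (hr : (p : ℤ) ∣ f.eval (r, 1)) : (f.neighbor p r).disc = f.disc := by
  have hdiv := Int.mul_ediv_cancel' hr
  rw [← f.disc_shift r]
  simp only [disc, discrim, neighbor]
  linear_combination -4 * f.a * hdiv

theorem eval_lift (hr : (p : ℤ) ∣ f.eval (r, 1)) (v : ℤ × ℤ) :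
    f.eval (r * v.2 + p * v.1, v.2) = p * (f.neighbor p r).eval v := by
  have hdiv := Int.mul_ediv_cancel' hr
  have heval : f.eval (r * v.2 + p * v.1, v.2) =
      f.a * p ^ 2 * v.1 ^ 2 + (2 * f.a * r + f.b) * p * v.1 * v.2 + f.eval (r, 1) * v.2 ^ 2 := by
    simp only [eval]
    ring
  rw [heval, eval.eq_def (f.neighbor p r)]
  simp only [neighbor]
  linear_combination -v.2 ^ 2 * hdiv

end Neighbor

section Prime

variable {f} {p : ℕ} [Fact p.Prime]

variable (f p) in
/-- The roots of `f(x, 1)` modulo `p`. -/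
def roots : Finset (ZMod p) := {x | f.a * x ^ 2 + f.b * x + f.c = 0}

theorem mem_roots_iff_dvd {r : ZMod p} : r ∈ f.roots p ↔ (p : ℤ) ∣ f.eval (r.val, 1) := by
  rw [← ZMod.intCast_zmod_eq_zero_iff_dvd, roots, Finset.mem_filter_univ]
  simp [eval]

theorem cast_eval_eq_zero {n : ℕ} {v : ℤ × ℤ} (hv : v ∈ f.reps (p * n)) :
    (f.a : ZMod p) * v.1 ^ 2 + f.b * v.1 * v.2 + f.c * v.2 ^ 2 = 0 := by
  simpa [eval] using congrArg (Int.cast : ℤ → ZMod p) hv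

theorem cast_fst_eq_zero (ha : (f.a : ZMod p) ≠ 0) {n : ℕ} {v : ℤ × ℤ} (hv : v ∈ f.reps (p * n))
    (hy : (v.2 : ZMod p) = 0) : (v.1 : ZMod p) = 0 := by
  simpa [hy, ha] using cast_eval_eq_zero hv

theorem ncard_reps_inter_line {r : ZMod p} (hr : r ∈ f.roots p) (n : ℕ) :
    (f.reps (p * n) ∩ {v | (v.1 : ZMod p) = r * v.2}).ncard =
      (f.neighbor p r.val).repCount n := by
  have hp : (p : ℤ) ≠ 0 := mod_cast (Fact.out : p.Prime).ne_zero
  let φ (v : ℤ × ℤ) : ℤ × ℤ := (r.val * v.2 + p * v.1, v.2)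
  have hφ : φ.Injective := by
    rintro ⟨x, y⟩ ⟨x', y'⟩ h
    obtain ⟨hx, rfl⟩ := Prod.ext_iff.1 h
    rw [add_right_inj, mul_right_inj' hp] at hx
    exact Prod.ext hx rfl
  have hrange : Set.range φ = {v | (v.1 : ZMod p) = r * v.2} := by
    ext ⟨x, y⟩
    refine ⟨?_, fun h => ?_⟩
    · rintro ⟨v, hv⟩
      obtain ⟨rfl, rfl⟩ := Prod.ext_iff.1 hv
      simp [φ]
    · obtain ⟨t, ht⟩ : (p : ℤ) ∣ x - r.val * y := by
        rw [← ZMod.intCast_zmod_eq_zero_iff_dvd]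
        simpa [sub_eq_zero] using h
      exact ⟨(t, y), Prod.ext (by simp only [φ]; lia) rfl⟩
  rw [← hrange]
  refine ncard_reps_inter_range hφ fun v => ?_
  rw [eval_lift (mem_roots_iff_dvd.1 hr), Nat.cast_mul, mul_right_inj' hp]

theorem ncard_reps_inter_snd_eq_zero (ha : (f.a : ZMod p) ≠ 0) (n : ℕ) :
    (f.reps (p * n) ∩ {v | (v.2 : ZMod p) = 0}).ncard =
      if p ∣ n then f.repCount (n / p) else 0 := by
  have hp : p ≠ 0 := (Fact.out : p.Prime).ne_zero
  have hpZ : (p : ℤ) ≠ 0 := mod_cast hp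
  have hset : f.reps (p * n) ∩ {v | (v.2 : ZMod p) = 0} =
      f.reps (p * n) ∩ Set.range fun v : ℤ × ℤ => (p * v.1, p * v.2) := by
    ext ⟨x, y⟩
    refine and_congr_right fun hxy => ⟨fun hy => ?_, ?_⟩
    · obtain ⟨x', rfl⟩ := (ZMod.intCast_zmod_eq_zero_iff_dvd _ _).1 (cast_fst_eq_zero ha hxy hy)
      obtain ⟨y', rfl⟩ := (ZMod.intCast_zmod_eq_zero_iff_dvd _ _).1 hy
      exact ⟨(x', y'), rfl⟩
    · rintro ⟨v, hv⟩
      obtain ⟨rfl, rfl⟩ := Prod.ext_iff.1 hv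
      simp
  have hinj : Function.Injective fun v : ℤ × ℤ => ((p : ℤ) * v.1, (p : ℤ) * v.2) := by
    intro v w h
    simpa [Prod.ext_iff, hp] using h
  rw [hset, ← f.repCount_scale hp]
  refine ncard_reps_inter_range hinj fun v => ?_
  have heval : f.eval (p * v.1, p * v.2) = p * eval ⟨p * f.a, p * f.b, p * f.c⟩ v := by
    simp only [eval]
    ring
  rw [heval, Nat.cast_mul, mul_right_inj' hpZ]

theorem ncard_reps_inter_line_eq_add (hD : f.disc < 0) (ha : (f.a : ZMod p) ≠ 0) (n : ℕ)
    (r : ZMod p) :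
    (f.reps (p * n) ∩ {v | (v.1 : ZMod p) = r * v.2}).ncard =
      (f.reps (p * n) ∩ {v | (v.2 : ZMod p) = 0}).ncard +
        (f.reps (p * n) ∩ {v | (v.2 : ZMod p) ≠ 0 ∧ (v.1 : ZMod p) / v.2 = r}).ncard := by
  rw [← Set.ncard_inter_add_ncard_sdiff_eq_ncard _ {v : ℤ × ℤ | (v.2 : ZMod p) = 0}
    ((finite_reps hD _).inter_of_left _), Set.inter_assoc, Set.inter_sdiff_assoc]
  congr 2 <;> ext v <;> refine and_congr_right fun hv => ?_
  · refine and_iff_right_of_imp fun hy => ?_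
    rw [Set.mem_ofPred_eq] at hy ⊢
    rw [cast_fst_eq_zero ha hv hy, hy, mul_zero]
  · exact and_comm.trans (and_congr_right fun hy => (div_eq_iff hy).symm)

theorem repCount_prime_mul_eq_add_sum (hD : f.disc < 0) (n : ℕ) :
    f.repCount (p * n) = (f.reps (p * n) ∩ {v | (v.2 : ZMod p) = 0}).ncard +
      ∑ r ∈ f.roots p,
        (f.reps (p * n) ∩ {v | (v.2 : ZMod p) ≠ 0 ∧ (v.1 : ZMod p) / v.2 = r}).ncard := by
  have hfin := finite_reps hD (p * n)
  set S := hfin.toFinset with hS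
  have card_filter (Q : ℤ × ℤ → Prop) [DecidablePred Q] :
      (S.filter Q).card = (f.reps (p * n) ∩ {v | Q v}).ncard := by
    rw [← Set.ncard_coe_finset, Finset.coe_filter]
    congr 1 with v
    simp [hS]
  have hmaps : Set.MapsTo (fun v : ℤ × ℤ => (v.1 : ZMod p) / v.2)
      (S.filter fun v => ¬(v.2 : ZMod p) = 0) (f.roots p) := by
    intro v hv
    obtain ⟨hvS, hy⟩ := Finset.mem_filter.1 hv
    rw [Finset.mem_coe, roots, Finset.mem_filter_univ]
    field_simp
    linear_combination cast_eval_eq_zero (hfin.mem_toFinset.1 hvS)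
  rw [repCount, Set.ncard_eq_toFinset_card _ hfin, ← hS,
    ← Finset.card_filter_add_card_filter_not fun v => (v.2 : ZMod p) = 0,
    Finset.card_eq_sum_card_fiberwise hmaps, card_filter]
  simp only [Finset.filter_filter, card_filter, ne_eq]

/-- Sort the representations of `p n` with `p ∤ y` by the root `x / y` of `f(x, 1)` modulo `p`; for
each root `r`, the line `x = r y` also contains all the representations with `p ∣ y`. -/
theorem repCount_prime_mul (hD : f.disc < 0) (ha : (f.a : ZMod p) ≠ 0) (n : ℕ) :
    (f.repCount (p * n) : ℤ) =
      ((if p ∣ n then f.repCount (n / p) else 0 : ℕ) : ℤ) +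
        ∑ r ∈ f.roots p, ((f.neighbor p r.val).repCount n -
          ((if p ∣ n then f.repCount (n / p) else 0 : ℕ) : ℤ)) := by
  rw [repCount_prime_mul_eq_add_sum hD, ← ncard_reps_inter_snd_eq_zero ha, Nat.cast_add,
    Nat.cast_sum]
  congr 1
  refine Finset.sum_congr rfl fun r hr => ?_
  rw [← ncard_reps_inter_line hr, ncard_reps_inter_line_eq_add hD ha, Nat.cast_add,
    add_sub_cancel_left]

end Prime

theorem card_roots {f : BinaryForm} {p : ℕ} [Fact p.Prime] (hp : p ≠ 2) (ha : (f.a : ZMod p) ≠ 0) :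
    ((f.roots p).card : ℤ) = legendreSym p f.disc + 1 := by
  have : NeZero (2 : ZMod p) := ⟨Ring.two_ne_zero (by rwa [ZMod.ringChar_zmod_n])⟩
  have hbij : Function.Bijective fun x : ZMod p => 2 * f.a * x + f.b :=
    (Equiv.addRight (f.b : ZMod p)).bijective.comp
      (mulLeft_bijective₀ _ (mul_ne_zero two_ne_zero ha))
  rw [← legendreSym.card_sqrts p hp]
  refine congrArg Nat.cast (Finset.card_bijective _ hbij fun x => ?_)
  rw [roots, Finset.mem_filter_univ, Set.mem_toFinset, Set.mem_ofPred_eq, pow_two x,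
    quadratic_eq_zero_iff_discrim_eq_sq ha, eq_comm, disc]
  simp [discrim]

end BinaryForm

/-! ### Discriminant `-15` -/

instance fact_prime_five : Fact (Nat.Prime 5) := ⟨Nat.prime_five⟩

theorem chiNeg3_eq_legendreSym (n : ℕ) : chiNeg3 n = legendreSym 3 n := by
  rw [legendreSym.mod, ← Int.natCast_mod n 3, chiNeg3]
  have := Nat.mod_lt n (show 0 < 3 by decide)
  interval_cases n % 3 <;> decide

theorem chi5_eq_legendreSym (n : ℕ) : chi5 n = legendreSym 5 n := by
  rw [legendreSym.mod, ← Int.natCast_mod n 5, chi5]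
  have := Nat.mod_lt n (show 0 < 5 by decide)
  interval_cases n % 5 <;> decide

theorem legendreSym_neg_fifteen {p : ℕ} [Fact p.Prime] (hp : p ≠ 2) :
    legendreSym p (-15) = legendreSym 3 p * legendreSym 5 p := by
  have hodd := (Fact.out : p.Prime).eq_two_or_odd.resolve_left hp
  have h3 := legendreSym.quadratic_reciprocity' (p := 3) (by decide) hp
  have h5 := legendreSym.quadratic_reciprocity' (p := 5) (by decide) hp
  have hneg : legendreSym p (-1) = (-1) ^ (p / 2) := by
    rw [legendreSym.at_neg_one hp, ZMod.χ₄_eq_neg_one_pow hodd]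
  have hsq : (-1 : ℤ) ^ (p / 2) * (-1) ^ (p / 2) = 1 := by rw [← mul_pow]; simp
  calc legendreSym p (-15)
      = legendreSym p (-1) * (legendreSym p (3 : ℕ) * legendreSym p (5 : ℕ)) := by
        rw [← legendreSym.mul, ← legendreSym.mul]; norm_num
    _ = legendreSym 3 p * legendreSym 5 p := by
        rw [hneg, h3, h5]
        norm_num [pow_mul, ← mul_assoc, hsq]

namespace BinaryForm

variable {f : BinaryForm}

theorem roots_two_of_disc_eq_neg_fifteen (hD : f.disc = -15) (ha : (f.a : ZMod 2) ≠ 0) :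
    f.roots 2 = Finset.univ := by
  rw [Ne, ZMod.intCast_eq_zero_iff_even, Int.not_even_iff_odd] at ha
  rw [disc, discrim] at hD
  have hb : Odd f.b := by
    refine (Int.odd_pow' two_ne_zero).1 ⟨2 * f.a * f.c - 8, ?_⟩
    lia
  have hc : Even f.c := by
    obtain ⟨k, hk⟩ := hb
    have hac : f.a * f.c = k * (k + 1) + 4 := by
      rw [hk] at hD
      linarith
    refine (Int.even_mul.1 (hac ▸ ?_)).resolve_left (Int.not_even_iff_odd.2 ha)
    exact (Int.even_mul_succ_self k).add (by decide)
  refine Finset.filter_true_of_mem fun x _ => ?_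
  rw [hb.intCast_zmod_two, hc.intCast_zmod_two, ha.intCast_zmod_two]
  decide +revert

theorem card_roots_of_disc_eq_neg_fifteen {p : ℕ} [Fact p.Prime] (hD : f.disc = -15)
    (ha : (f.a : ZMod p) ≠ 0) :
    ((f.roots p).card : ℤ) = legendreSym 3 p * legendreSym 5 p + 1 := by
  rcases eq_or_ne p 2 with rfl | hp
  · rw [roots_two_of_disc_eq_neg_fifteen hD ha]
    decide
  · rw [card_roots hp ha, hD, legendreSym_neg_fifteen hp]

/-- The difference of the representation numbers of the two classes of forms of discriminant
`-15`. -/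
noncomputable def classDiff (n : ℕ) : ℤ := repCount ⟨1, 1, 4⟩ n - repCount ⟨2, 1, 2⟩ n

section Genus

variable {p q : ℕ} [Fact p.Prime] [Fact q.Prime]

theorem legendreSym_two_of_eq_three_or_five (hq : q = 3 ∨ q = 5) : legendreSym q 2 = -1 := by
  rw [legendreSym.at_two (by lia)]
  rcases hq with rfl | rfl <;> decide

/-- The genus character at `q` tells which of the two classes contains `f`. -/
theorem two_mul_repCount (hq : q = 3 ∨ q = 5) (hD : f.disc = -15) (ha : 0 < f.a)
    (haq : (f.a : ZMod q) ≠ 0) (n : ℕ) :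
    2 * (f.repCount n : ℤ) =
      repCount ⟨1, 1, 4⟩ n + repCount ⟨2, 1, 2⟩ n + legendreSym q f.a * classDiff n := by
  have hq2 : q ≠ 2 := by lia
  have hqD (g : BinaryForm) (hg : g.disc = -15) : (g.disc : ZMod q) = 0 := by
    rw [hg, ZMod.intCast_zmod_eq_zero_iff_dvd]
    rcases hq with rfl | rfl <;> decide
  have hfa : f.eval (1, 0) = f.a := by simp [eval]
  rcases f.isEquiv_of_disc_eq_neg_fifteen ha hD with h | h <;>
    obtain ⟨v, hv⟩ := h.exists_eval_eq (1, 0) <;> rw [hfa] at hv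
  · have hsym : legendreSym q f.a = legendreSym q 1 := by
      rw [← hv]
      exact legendreSym_eval_eq _ hq2 (hqD _ rfl) (w := (1, 0)) (hv ▸ haq) (by simp [eval])
    rw [h.repCount_eq, hsym, legendreSym.at_one, classDiff]
    ring
  · have htwo : ((2 : ℤ) : ZMod q) ≠ 0 := mod_cast Ring.two_ne_zero (by
      rwa [ZMod.ringChar_zmod_n])
    have hsym : legendreSym q f.a = legendreSym q 2 := by
      rw [← hv]
      exact legendreSym_eval_eq _ hq2 (hqD _ rfl) (w := (1, 0)) (hv ▸ haq) htwo
    rw [h.repCount_eq, hsym, legendreSym_two_of_eq_three_or_five hq, classDiff]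
    ring

theorem two_mul_repCount_prime_mul (hq : q = 3 ∨ q = 5) (hD : f.disc = -15) (ha : 0 < f.a)
    (haq : (f.a : ZMod q) ≠ 0) (hap : (f.a : ZMod p) ≠ 0) (hpq : p ≠ q) (n : ℕ) :
    2 * (f.repCount (p * n) : ℤ) =
      2 * ((if p ∣ n then f.repCount (n / p) else 0 : ℕ) : ℤ) +
        (legendreSym 3 p * legendreSym 5 p + 1) *
          (repCount ⟨1, 1, 4⟩ n + repCount ⟨2, 1, 2⟩ n +
            legendreSym q f.a * legendreSym q p * classDiff n -
              2 * ((if p ∣ n then f.repCount (n / p) else 0 : ℕ) : ℤ)) := by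
  have hneighbor (r) (hr : r ∈ f.roots p) : 2 * ((f.neighbor p r.val).repCount n : ℤ) =
      repCount ⟨1, 1, 4⟩ n + repCount ⟨2, 1, 2⟩ n +
        legendreSym q f.a * legendreSym q p * classDiff n := by
    have hpos : (0 : ℤ) < p := mod_cast (Fact.out : p.Prime).pos
    have hp : (p : ZMod q) ≠ 0 := by
      rwa [Ne, ZMod.natCast_eq_zero_iff, Nat.prime_dvd_prime_iff_eq Fact.out Fact.out, eq_comm]
    rw [← legendreSym.mul]
    refine two_mul_repCount hq ((disc_neighbor (mem_roots_iff_dvd.1 hr)).trans hD)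
      (mul_pos ha hpos) ?_ n
    simpa [neighbor] using And.intro haq hp
  rw [repCount_prime_mul (by lia) hap, mul_add, Finset.mul_sum,
    ← card_roots_of_disc_eq_neg_fifteen hD hap, ← nsmul_eq_mul, ← Finset.sum_const]
  congr 1
  refine Finset.sum_congr rfl fun r hr => ?_
  rw [mul_sub, hneighbor r hr]

/-- `repCount_prime_mul` needs a leading coefficient prime to `p`, so `[2, 1, 2]` has to be replaced
by an equivalent form at `p = 2`. -/
theorem exists_isEquiv_nonprincipal (p : ℕ) [Fact p.Prime] : ∃ h : BinaryForm,
    h.IsEquiv ⟨2, 1, 2⟩ ∧ h.disc = -15 ∧ (h.a = 2 ∨ h.a = 17) ∧ (h.a : ZMod p) ≠ 0 := by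
  rcases eq_or_ne p 2 with rfl | hp
  · exact ⟨⟨17, 11, 2⟩, (isEquiv_swap _).trans ((isEquiv_shift _ (-3)).trans (isEquiv_neg _)), rfl,
      Or.inr rfl, ZMod.intCast_eq_zero_iff_even.not.2 (by decide)⟩
  · refine ⟨⟨2, 1, 2⟩, ⟨AddEquiv.refl _, fun _ => rfl⟩, rfl, Or.inl rfl, ?_⟩
    exact_mod_cast Ring.two_ne_zero (by rwa [ZMod.ringChar_zmod_n])

theorem classDiff_prime_mul (hq : q = 3 ∨ q = 5) (hpq : p ≠ q) (n : ℕ) :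
    classDiff (p * n) = (if p ∣ n then classDiff (n / p) else 0) +
      (legendreSym 3 p * legendreSym 5 p + 1) *
        (legendreSym q p * classDiff n - if p ∣ n then classDiff (n / p) else 0) := by
  obtain ⟨h, hequiv, hD, ha, hap⟩ := exists_isEquiv_nonprincipal p
  have hsym : legendreSym q h.a = -1 := by
    rw [← legendreSym_two_of_eq_three_or_five hq, legendreSym.mod q h.a, legendreSym.mod q 2]
    rcases hq with rfl | rfl <;> rcases ha with ha | ha <;> rw [ha] <;> rfl
  have haq : (h.a : ZMod q) ≠ 0 := by
    rw [Ne, ← legendreSym.eq_zero_iff, hsym]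
    decide
  have hprincipal := two_mul_repCount_prime_mul (f := ⟨1, 1, 4⟩) hq rfl one_pos (by simp) (by simp)
    hpq n
  have hother := two_mul_repCount_prime_mul hq hD (by lia) haq hap hpq n
  simp only [hequiv.repCount_eq, hsym, legendreSym.at_one] at hprincipal hother
  have hdvd : (if p ∣ n then classDiff (n / p) else 0) =
      ((if p ∣ n then repCount ⟨1, 1, 4⟩ (n / p) else 0 : ℕ) : ℤ) -
        ((if p ∣ n then repCount ⟨2, 1, 2⟩ (n / p) else 0 : ℕ) : ℤ) := by
    split_ifs <;> simp [classDiff]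
  rw [hdvd, classDiff]
  linarith

end Genus

theorem snd_eq_zero_of_mem_reps_one (hD : f.disc = -15) (ha : f.a ≤ 3) {v : ℤ × ℤ}
    (hv : v ∈ f.reps 1) : v.2 = 0 := by
  have h := f.four_mul_eval_mul_eval v (1, 0)
  have hfa : f.eval (1, 0) = f.a := by simp [eval]
  rw [(hv : f.eval v = 1), hD, hfa, Nat.cast_one] at h
  simp only [mul_zero, mul_one, zero_add, add_zero, zero_sub] at h
  have hsq : v.2 ^ 2 < 1 := by nlinarith [sq_nonneg (2 * f.a * v.1 + f.b * v.2)]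
  exact pow_eq_zero_iff two_ne_zero |>.1 (le_antisymm (by lia) (sq_nonneg _))

theorem classDiff_one : classDiff 1 = 2 := by
  have hprincipal : repCount ⟨1, 1, 4⟩ 1 = 2 := by
    rw [repCount, ← Set.ncard_pair (show ((1, 0) : ℤ × ℤ) ≠ (-1, 0) by decide)]
    congr 1 with v
    constructor
    · intro hv
      have hy := snd_eq_zero_of_mem_reps_one rfl (by simp) hv
      have hx : v.1 ^ 2 = 1 := by simpa [eval, hy] using hv
      exact (sq_eq_one_iff.1 hx).imp (Prod.ext · hy) (Prod.ext · hy)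
    · rintro (rfl | rfl) <;> rfl
  have hother : repCount ⟨2, 1, 2⟩ 1 = 0 := by
    refine (congrArg Set.ncard (Set.eq_empty_of_forall_notMem fun v hv => ?_)).trans
      (Set.ncard_empty _)
    have hy := snd_eq_zero_of_mem_reps_one rfl (by simp) hv
    have hx : 2 * v.1 ^ 2 = 1 := by simpa [eval, hy] using hv
    lia
  rw [classDiff, hprincipal, hother]
  norm_num

end BinaryForm

/-! ### Hecke recursions -/

/-- The recursion at all primes satisfied by the convolution of two completely multiplicative
functions `α` and `β`; equivalently, the Dirichlet series of `F` is `F 1` times an Euler product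
with factors `((1 - α p p⁻ˢ) (1 - β p p⁻ˢ))⁻¹`. -/
def HeckeRecursion {R : Type*} [CommRing R] (α β F : ℕ → R) : Prop :=
  ∀ p : ℕ, p.Prime → ∀ n,
    F (p * n) = (α p + β p) * F n - α p * β p * if p ∣ n then F (n / p) else 0

section Hecke

variable {R : Type*} [CommRing R]

theorem HeckeRecursion.eq_mul {α β F G : ℕ → R} (hF : HeckeRecursion α β F)
    (hG : HeckeRecursion α β G) (hG1 : G 1 = 1) {n : ℕ} (hn : n ≠ 0) : F n = F 1 * G n := by
  induction n using Nat.strong_induction_on with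
  | _ n ih =>
    rcases eq_or_ne n 1 with rfl | hn1
    · rw [hG1, mul_one]
    obtain ⟨p, hp, m, rfl⟩ := Nat.exists_prime_and_dvd hn1
    have hm : 0 < m := Nat.pos_of_ne_zero (right_ne_zero_of_mul hn)
    have hrec : (if p ∣ m then F (m / p) else 0) = F 1 * if p ∣ m then G (m / p) else 0 := by
      split_ifs with hpm
      · have hlt := (Nat.div_le_self m p).trans_lt (lt_mul_of_one_lt_left hm hp.one_lt)
        exact ih _ hlt (Nat.div_pos (Nat.le_of_dvd hm hpm) hp.pos).ne'
      · rw [mul_zero]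
    rw [hF p hp, hG p hp, ih m (lt_mul_of_one_lt_left hm hp.one_lt) hm.ne', hrec]
    ring

theorem filter_dvd_fst_divisorsAntidiagonal {p : ℕ} (hp : p ≠ 0) (n : ℕ) :
    {d ∈ (p * n).divisorsAntidiagonal | p ∣ d.1} =
      n.divisorsAntidiagonal.image fun d => (p * d.1, d.2) := by
  ext ⟨d, e⟩
  simp only [Finset.mem_filter, Nat.mem_divisorsAntidiagonal, Finset.mem_image, Prod.exists,
    Prod.mk.injEq]
  constructor
  · rintro ⟨⟨hde, hn⟩, d, rfl⟩
    rw [mul_assoc] at hde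
    exact ⟨d, e, ⟨mul_left_cancel₀ hp hde, right_ne_zero_of_mul hn⟩, rfl, rfl⟩
  · rintro ⟨d, e, ⟨rfl, hn⟩, rfl, rfl⟩
    exact ⟨⟨mul_assoc .., mul_ne_zero hp hn⟩, dvd_mul_right ..⟩

theorem filter_not_dvd_fst_divisorsAntidiagonal {p : ℕ} (hp : p.Prime) (n : ℕ) :
    {d ∈ (p * n).divisorsAntidiagonal | ¬p ∣ d.1} =
      {d ∈ n.divisorsAntidiagonal | ¬p ∣ d.1}.image fun d => (d.1, p * d.2) := by
  ext ⟨d, e⟩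
  simp only [Finset.mem_filter, Nat.mem_divisorsAntidiagonal, Finset.mem_image, Prod.exists,
    Prod.mk.injEq]
  constructor
  · rintro ⟨⟨hde, hn⟩, hd⟩
    obtain ⟨e, rfl⟩ := (hp.dvd_mul.1 (Dvd.intro _ hde.symm)).resolve_left hd
    rw [mul_left_comm] at hde
    exact ⟨d, e, ⟨⟨mul_left_cancel₀ hp.ne_zero hde, right_ne_zero_of_mul hn⟩, hd⟩, rfl, rfl⟩
  · rintro ⟨d, e, ⟨⟨rfl, hn⟩, hd⟩, rfl, rfl⟩
    exact ⟨⟨mul_left_comm .., mul_ne_zero hp.ne_zero hn⟩, hd⟩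

variable {α β : ℕ → R}

theorem sum_filter_dvd_fst (hα : ∀ m n, α (m * n) = α m * α n) {p : ℕ} (hp : p ≠ 0) (n : ℕ) :
    ∑ d ∈ (p * n).divisorsAntidiagonal with p ∣ d.1, α d.1 * β d.2 =
      α p * LSeries.convolution α β n := by
  rw [filter_dvd_fst_divisorsAntidiagonal hp, Finset.sum_image, LSeries.convolution_def,
    Finset.mul_sum]
  · simp only [hα, mul_assoc]
  · rintro ⟨d, e⟩ - ⟨d', e'⟩ - h
    simpa [hp] using h

theorem sum_filter_not_dvd_fst (hβ : ∀ m n, β (m * n) = β m * β n) {p : ℕ} (hp : p.Prime) (n : ℕ) :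
    ∑ d ∈ (p * n).divisorsAntidiagonal with ¬p ∣ d.1, α d.1 * β d.2 =
      β p * ∑ d ∈ n.divisorsAntidiagonal with ¬p ∣ d.1, α d.1 * β d.2 := by
  rw [filter_not_dvd_fst_divisorsAntidiagonal hp, Finset.sum_image, Finset.mul_sum]
  · simp only [hβ, mul_left_comm]
  · rintro ⟨d, e⟩ - ⟨d', e'⟩ - h
    simpa [hp.ne_zero] using h

theorem heckeRecursion_convolution (hα : ∀ m n, α (m * n) = α m * α n)
    (hβ : ∀ m n, β (m * n) = β m * β n) : HeckeRecursion α β (LSeries.convolution α β) := by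
  intro p hp n
  have hdvd : ∑ d ∈ n.divisorsAntidiagonal with p ∣ d.1, α d.1 * β d.2 =
      α p * if p ∣ n then LSeries.convolution α β (n / p) else 0 := by
    split_ifs with hpn
    · obtain ⟨m, rfl⟩ := hpn
      rw [sum_filter_dvd_fst hα hp.ne_zero, Nat.mul_div_cancel_left _ hp.pos]
    · rw [mul_zero, Finset.filter_false_of_mem, Finset.sum_empty]
      exact fun d hd hpd => hpn (hpd.trans (Dvd.intro _ (Nat.mem_divisorsAntidiagonal.1 hd).1))
  have hsplit (m : ℕ) : LSeries.convolution α β m =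
      ∑ d ∈ m.divisorsAntidiagonal with p ∣ d.1, α d.1 * β d.2 +
        ∑ d ∈ m.divisorsAntidiagonal with ¬p ∣ d.1, α d.1 * β d.2 := by
    rw [Finset.sum_filter_add_sum_filter_not, LSeries.convolution_def]
  rw [hsplit (p * n), sum_filter_dvd_fst hα hp.ne_zero, sum_filter_not_dvd_fst hβ hp]
  linear_combination -β p * (hdvd + hsplit n)

end Hecke

theorem chiNeg3_mul (m n : ℕ) : chiNeg3 (m * n) = chiNeg3 m * chiNeg3 n := by
  simp only [chiNeg3_eq_legendreSym, Nat.cast_mul, legendreSym.mul]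

theorem chi5_mul (m n : ℕ) : chi5 (m * n) = chi5 m * chi5 n := by
  simp only [chi5_eq_legendreSym, Nat.cast_mul, legendreSym.mul]

namespace BinaryForm

theorem heckeRecursion_classDiff : HeckeRecursion chiNeg3 chi5 classDiff := by
  intro p hp n
  have : Fact p.Prime := ⟨hp⟩
  rw [chiNeg3_eq_legendreSym, chi5_eq_legendreSym]
  have hsq {q : ℕ} [Fact q.Prime] (hpq : p ≠ q) : legendreSym q p ^ 2 = 1 := by
    refine legendreSym.sq_one q ?_
    rwa [Int.cast_natCast, Ne, ZMod.natCast_eq_zero_iff,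
      Nat.prime_dvd_prime_iff_eq Fact.out Fact.out, eq_comm]
  rcases eq_or_ne p 3 with hp3 | hp3
  · have hp5 : p ≠ 5 := by lia
    rw [classDiff_prime_mul (Or.inr rfl) hp5]
    linear_combination legendreSym 3 p * classDiff n * hsq hp5
  · rw [classDiff_prime_mul (Or.inl rfl) hp3]
    linear_combination legendreSym 5 p * classDiff n * hsq hp3

theorem classDiff_eq_two_mul_convolution {n : ℕ} (hn : n ≠ 0) :
    classDiff n = 2 * LSeries.convolution chiNeg3 chi5 n := by
  rw [← classDiff_one]
  refine heckeRecursion_classDiff.eq_mul (heckeRecursion_convolution chiNeg3_mul chi5_mul) ?_ hn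
  simp [LSeries.convolution_def, chiNeg3, chi5]

/-! ### The forms `x² + 15 y²` and `3 x² + 5 y²` -/

/-- The difference of the representation numbers of the diagonal forms `x² + 15 y²` and
`3 x² + 5 y²` of discriminant `-60`. -/
noncomputable def diagDiff (n : ℕ) : ℤ := repCount ⟨1, 0, 15⟩ n - repCount ⟨3, 0, 5⟩ n

theorem repCount_one_fifteen_of_odd {n : ℕ} (hn : Odd n) :
    repCount ⟨1, 0, 15⟩ n = repCount ⟨1, 1, 4⟩ n := by
  let φ (v : ℤ × ℤ) : ℤ × ℤ := (v.1 - v.2, 2 * v.2)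
  have hφ : φ.Injective := fun v w h => by
    simp only [φ, Prod.mk.injEq] at h
    ext <;> lia
  have heval (v : ℤ × ℤ) : eval ⟨1, 1, 4⟩ (φ v) = eval ⟨1, 0, 15⟩ v := by
    simp only [eval, φ]
    ring
  refine (repCount_eq_of_reps_subset_range hφ heval fun v hv => ?_).symm
  have hodd : Odd (v.1 * (v.1 + v.2) + 2 * (2 * v.2 ^ 2)) := by
    convert (Int.odd_coe_nat n).2 hn using 1
    rw [← (hv : _ = (n : ℤ)), eval]
    ring
  obtain ⟨hx, hxy⟩ := Int.odd_mul.1 ((Int.odd_add.1 hodd).2 (even_two_mul _))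
  obtain ⟨k, hk⟩ : Even v.2 := (Int.odd_add.1 hxy).1 hx
  exact ⟨(v.1 + k, k), Prod.ext (by simp [φ]) (by simp only [φ]; lia)⟩

theorem repCount_three_five_of_odd {n : ℕ} (hn : Odd n) :
    repCount ⟨3, 0, 5⟩ n = repCount ⟨2, 1, 2⟩ n := by
  let φ (v : ℤ × ℤ) : ℤ × ℤ := (v.2 + v.1, v.2 - v.1)
  have hφ : φ.Injective := fun v w h => by
    simp only [φ, Prod.mk.injEq] at h
    ext <;> lia
  have heval (v : ℤ × ℤ) : eval ⟨2, 1, 2⟩ (φ v) = eval ⟨3, 0, 5⟩ v := by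
    simp only [eval, φ]
    ring
  refine (repCount_eq_of_reps_subset_range hφ heval fun v hv => ?_).symm
  have hodd : Odd (v.1 * v.2 + 2 * (v.1 ^ 2 + v.2 ^ 2)) := by
    convert (Int.odd_coe_nat n).2 hn using 1
    rw [← (hv : _ = (n : ℤ)), eval]
    ring
  obtain ⟨hx, hy⟩ := Int.odd_mul.1 ((Int.odd_add.1 hodd).2 (even_two_mul _))
  obtain ⟨k, hk⟩ := hx.sub_odd hy
  exact ⟨(k, v.2 + k), Prod.ext (by simp only [φ]; lia) (by simp [φ])⟩

theorem repCount_two_mul {f : BinaryForm} (hD : f.disc < 0) (ha : (f.a : ZMod 2) ≠ 0)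
    (hroots : f.roots 2 = {1}) (n : ℕ) : f.repCount (2 * n) = (f.neighbor 2 1).repCount n := by
  have h := repCount_prime_mul hD ha n
  rw [hroots, Finset.sum_singleton, add_sub_cancel] at h
  exact_mod_cast h

theorem diagDiff_two_mul (n : ℕ) :
    diagDiff (2 * n) = if 2 ∣ n then classDiff (n / 2) else 0 := by
  have hprincipal : repCount ⟨1, 0, 15⟩ (2 * n) = if 2 ∣ n then repCount ⟨1, 1, 4⟩ (n / 2) else 0 :=
    (repCount_two_mul (by decide) (by decide) (by decide) n).trans
      (repCount_scale ⟨1, 1, 4⟩ two_ne_zero n)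
  have hequiv : IsEquiv ⟨3, 3, 2⟩ ⟨2, 1, 2⟩ :=
    (isEquiv_swap _).trans ((isEquiv_shift _ (-1)).trans (isEquiv_neg _))
  have hother : repCount ⟨3, 0, 5⟩ (2 * n) = if 2 ∣ n then repCount ⟨2, 1, 2⟩ (n / 2) else 0 := by
    rw [← hequiv.repCount_eq]
    exact (repCount_two_mul (by decide) (by decide) (by decide) n).trans
      (repCount_scale ⟨3, 3, 2⟩ two_ne_zero n)
  rw [diagDiff, hprincipal, hother]
  split_ifs <;> simp [classDiff]

theorem diagDiff_eq (n : ℕ) :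
    diagDiff n = classDiff n + 2 * (if 2 ∣ n then classDiff (n / 2) else 0) +
      2 * if 4 ∣ n then classDiff (n / 4) else 0 := by
  rcases Nat.even_or_odd' n with ⟨m, rfl | rfl⟩
  · have hdvd : 4 ∣ 2 * m ↔ 2 ∣ m := by lia
    have hdiv : 2 * m / 4 = m / 2 := Nat.mul_div_mul_left m 2 two_pos
    have hchi3 : chiNeg3 2 = -1 := rfl
    have hchi5 : chi5 2 = -1 := rfl
    rw [diagDiff_two_mul, heckeRecursion_classDiff 2 Nat.prime_two, if_pos (dvd_mul_right ..),
      Nat.mul_div_cancel_left _ two_pos, hchi3, hchi5, hdiv]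
    simp only [hdvd]
    ring
  · have hodd : Odd (2 * m + 1) := ⟨m, rfl⟩
    rw [if_neg (by lia), if_neg (by lia), diagDiff, repCount_one_fifteen_of_odd hodd,
      repCount_three_five_of_odd hodd, classDiff]
    ring

end BinaryForm

/-! ### Dirichlet series -/

theorem summable_norm_rpow_int_prod {r : ℝ} (hr : 2 < r) :
    Summable fun v : ℤ × ℤ => ‖v‖ ^ (-r) := by
  have h := EisensteinSeries.summable_one_div_norm_rpow hr
  rw [← (finTwoArrowEquiv ℤ).symm.summable_iff] at h
  refine h.congr fun v => ?_
  rw [Function.comp_apply, EisensteinSeries.norm_eq_max_natAbs, Prod.norm_def, Int.norm_eq_abs,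
    Int.norm_eq_abs]
  simp

theorem LSeriesHasSum_dilate {k : ℕ} (hk : k ≠ 0) {a : ℕ → ℂ} {s A : ℂ}
    (h : LSeriesHasSum a s A) :
    LSeriesHasSum (fun n => if k ∣ n then a (n / k) else 0) s ((k : ℂ) ^ (-s) * A) := by
  have hpos : 0 < k := Nat.pos_of_ne_zero hk
  have hinj : Function.Injective (k * ·) := mul_right_injective₀ hk
  refine (hinj.hasSum_iff fun n hn => ?_).1 ((h.mul_left ((k : ℂ) ^ (-s))).congr_fun fun n => ?_)
  · have hdvd : ¬ k ∣ n := fun ⟨m, hm⟩ => hn ⟨m, hm.symm⟩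
    simp [LSeries.term, hdvd]
  · rcases eq_or_ne n 0 with rfl | hn
    · simp
    · rw [Function.comp_apply, LSeries.term_of_ne_zero (mul_ne_zero hk hn),
        LSeries.term_of_ne_zero hn, if_pos (dvd_mul_right ..), Nat.mul_div_cancel_left _ hpos,
        Nat.cast_mul, Complex.natCast_mul_natCast_cpow, Complex.cpow_neg]
      field_simp

theorem LSeriesHasSum_LSer {χ : ℕ → ℤ} (hχ : ∀ n, |χ n| ≤ 1) {s : ℂ} (hs : 1 < s.re) :
    LSeriesHasSum (fun n => (χ n : ℂ)) s (LSer χ s) := by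
  have hsum : LSeriesSummable (fun n => (χ n : ℂ)) s := by
    refine LSeriesSummable_of_bounded_of_one_lt_re (m := 1) (fun n _ => ?_) hs
    rw [Complex.norm_intCast]
    exact_mod_cast hχ n
  refine LSeriesHasSum_iff.2 ⟨hsum, ?_⟩
  rw [LSeries, LSer, hsum.tsum_eq_zero_add, LSeries.term_zero, zero_add]
  exact tsum_congr fun n => by rw [LSeries.term_of_ne_zero n.succ_ne_zero, Nat.cast_succ]

theorem abs_chiNeg3_le_one (n : ℕ) : |chiNeg3 n| ≤ 1 := by
  rw [chiNeg3]
  split_ifs <;> simp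

theorem abs_chi5_le_one (n : ℕ) : |chi5 n| ≤ 1 := by
  rw [chi5]
  split_ifs <;> simp

namespace BinaryForm

section EpsteinZeta

variable {f : BinaryForm} {s : ℂ}

/-- The Epstein zeta function `∑' f(v)⁻ˢ` of a positive definite form, the sum running over the
nonzero integral vectors. -/
noncomputable def epsteinZeta (f : BinaryForm) (s : ℂ) : ℂ :=
  ∑' v : {v : ℤ × ℤ // v ≠ 0}, 1 / (f.eval v : ℂ) ^ s

theorem norm_sq_le (ha : 0 < f.a) (hD : f.disc < 0) (v : ℤ × ℤ) :
    ‖v‖ ^ 2 ≤ 4 * (f.a + f.c) * f.eval v := by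
  have hc := c_pos ha hD
  have hev := eval_nonneg ha hD v
  have hfst : v.1 ^ 2 ≤ 4 * (f.a + f.c) * f.eval v := by nlinarith [sq_fst_le hD v]
  have hsnd : v.2 ^ 2 ≤ 4 * (f.a + f.c) * f.eval v := by nlinarith [sq_snd_le hD v]
  rw [Prod.norm_def, Int.norm_eq_abs, Int.norm_eq_abs]
  rcases max_choice |(v.1 : ℝ)| |(v.2 : ℝ)| with h | h <;> rw [h, sq_abs] <;> exact_mod_cast ‹_›

theorem norm_one_div_eval_cpow_le (ha : 0 < f.a) (hD : f.disc < 0) (hs : 0 < s.re) (v : ℤ × ℤ) :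
    ‖1 / (f.eval v : ℂ) ^ s‖ ≤ (4 * (f.a + f.c) : ℝ) ^ s.re * ‖v‖ ^ (-(2 * s.re)) := by
  have hC : (0 : ℝ) < 4 * (f.a + f.c) := by exact_mod_cast by linarith [c_pos ha hD]
  rcases eq_or_ne v 0 with rfl | hv
  · have hs0 : s ≠ 0 := fun h => by simp [h] at hs
    have hzero : f.eval 0 = 0 := by simp [eval]
    rw [hzero, Int.cast_zero, Complex.zero_cpow hs0, div_zero, norm_zero]
    positivity
  · have heval : (0 : ℝ) < f.eval v := by exact_mod_cast eval_pos ha hD hv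
    have hnorm : 0 < ‖v‖ ^ 2 := by positivity
    calc ‖1 / (f.eval v : ℂ) ^ s‖ = (f.eval v : ℝ) ^ (-s.re) := by
          rw [← Complex.ofReal_intCast, norm_div, norm_one,
            Complex.norm_cpow_eq_rpow_re_of_pos heval, Real.rpow_neg heval.le, one_div]
      _ ≤ (‖v‖ ^ 2 / (4 * (f.a + f.c))) ^ (-s.re) := by
          refine Real.rpow_le_rpow_of_nonpos (by positivity) ?_ (by linarith)
          exact (div_le_iff₀' hC).2 (norm_sq_le ha hD v)
      _ = (4 * (f.a + f.c)) ^ s.re * ‖v‖ ^ (-(2 * s.re)) := by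
          rw [Real.div_rpow hnorm.le hC.le, Real.rpow_neg hC.le, div_inv_eq_mul, mul_comm,
            ← Real.rpow_natCast, ← Real.rpow_mul (norm_nonneg v), Nat.cast_two, mul_neg]

theorem summable_one_div_eval_cpow (ha : 0 < f.a) (hD : f.disc < 0) (hs : 1 < s.re) :
    Summable fun v : ℤ × ℤ => 1 / (f.eval v : ℂ) ^ s :=
  .of_norm_bounded ((summable_norm_rpow_int_prod (by linarith)).mul_left _)
    (norm_one_div_eval_cpow_le ha hD (by linarith))

theorem hasSum_epsteinZeta (ha : 0 < f.a) (hD : f.disc < 0) (hs : 1 < s.re) :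
    HasSum (fun v : {v : ℤ × ℤ // v ≠ 0} => 1 / (f.eval v : ℂ) ^ s) (f.epsteinZeta s) :=
  ((summable_one_div_eval_cpow ha hD hs).subtype _).hasSum

theorem LSeriesHasSum_repCount (ha : 0 < f.a) (hD : f.disc < 0) (hs : 1 < s.re) :
    LSeriesHasSum (fun n => (f.repCount n : ℂ)) s (f.epsteinZeta s) := by
  have hs0 : s ≠ 0 := fun h => by simp [h] at hs; linarith
  have hsupport : Function.support (fun v => 1 / (f.eval v : ℂ) ^ s) ⊆ {v | v ≠ 0} := by
    rintro v hv rfl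
    simp [eval, hs0] at hv
  have hzeta : HasSum (fun v => 1 / (f.eval v : ℂ) ^ s) (f.epsteinZeta s) :=
    (hasSum_subtype_iff_of_support_subset hsupport).1 (hasSum_epsteinZeta ha hD hs)
  refine (hzeta.tsum_fiberwise fun v => (f.eval v).toNat).congr_fun fun n => ?_
  have hfiber : (fun v => (f.eval v).toNat) ⁻¹' {n} = f.reps n := Set.ext fun v => by
    have := eval_nonneg ha hD v
    simp only [Set.mem_preimage, Set.mem_singleton_iff, mem_reps]
    lia
  have hconst (v : f.reps n) : 1 / (f.eval v : ℂ) ^ s = 1 / (n : ℂ) ^ s := by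
    rw [(v.2 : f.eval v = n), Int.cast_natCast]
  rw [hfiber, tsum_congr hconst, tsum_const, nsmul_eq_mul, Nat.card_coe_set_eq, mul_one_div]
  rcases eq_or_ne n 0 with rfl | hn
  · simp [hs0]
  · exact LSeries.term_of_ne_zero hn ..

theorem LSeriesHasSum_diagDiff_epsteinZeta (hs : 1 < s.re) :
    LSeriesHasSum (fun n => (diagDiff n : ℂ)) s
      (epsteinZeta ⟨1, 0, 15⟩ s - epsteinZeta ⟨3, 0, 5⟩ s) := by
  have h := (LSeriesHasSum_repCount (f := ⟨1, 0, 15⟩) (by decide) (by decide) hs).sub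
    (LSeriesHasSum_repCount (f := ⟨3, 0, 5⟩) (by decide) (by decide) hs)
  simpa [diagDiff, Pi.sub_def] using h

end EpsteinZeta

theorem LSeriesHasSum_classDiff {s : ℂ} (hs : 1 < s.re) :
    LSeriesHasSum (fun n => (classDiff n : ℂ)) s (2 * (LSer chiNeg3 s * LSer chi5 s)) := by
  refine (LSeriesHasSum_congr s _ fun {n} hn => ?_).2
    (((LSeriesHasSum_LSer abs_chiNeg3_le_one hs).convolution
      (LSeriesHasSum_LSer abs_chi5_le_one hs)).smul 2)
  simp [classDiff_eq_two_mul_convolution hn, LSeries.convolution_def]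

theorem LSeriesHasSum_diagDiff {s : ℂ} (hs : 1 < s.re) :
    LSeriesHasSum (fun n => (diagDiff n : ℂ)) s
      (2 * (1 + (2 : ℂ) ^ (1 - 2 * s) + (2 : ℂ) ^ (1 - s)) * LSer chiNeg3 s * LSer chi5 s) := by
  have h := LSeriesHasSum_classDiff hs
  have hsum := (h.add ((LSeriesHasSum_dilate two_ne_zero h).smul 2)).add
    ((LSeriesHasSum_dilate four_ne_zero h).smul 2)
  have hpow_one : (2 : ℂ) ^ (1 - s) = 2 * 2 ^ (-s) := by
    rw [sub_eq_add_neg, Complex.cpow_add _ _ two_ne_zero, Complex.cpow_one]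
  have hpow_two : (2 : ℂ) ^ (1 - 2 * s) = 2 * 4 ^ (-s) := by
    have hfour := Complex.natCast_mul_natCast_cpow 2 2 (-s)
    rw [sub_eq_add_neg, Complex.cpow_add _ _ two_ne_zero, Complex.cpow_one, ← mul_neg,
      Complex.cpow_ofNat_mul, sq]
    norm_num at hfour ⊢
    exact hfour.symm
  convert hsum using 1
  · funext n
    simp [diagDiff_eq, apply_ite (Int.cast : ℤ → ℂ)]
  · simp only [hpow_one, hpow_two, Nat.cast_ofNat]
    ring

end BinaryForm

/-- Lemma 3.3 (4): for `Re(s) > 1`,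
`∑'_{(m,k)≠0} [ (m²+15k²)^{-s} − (3m²+5k²)^{-s} ] = 2(1 + 2^{1−2s} + 2^{1−s}) L(χ₋₃, s) L(χ₅, s)`. -/
theorem lattice_sum_diff_eq_two_factor_L3_L5 (s : ℂ) (hs : 1 < s.re) :
    (∑' p : {p : ℤ × ℤ // p ≠ 0},
        (1 / (((p.1.1 : ℂ) ^ 2 + 15 * (p.1.2 : ℂ) ^ 2) ^ s) -
          1 / ((3 * (p.1.1 : ℂ) ^ 2 + 5 * (p.1.2 : ℂ) ^ 2) ^ s))) =
      2 * (1 + (2 : ℂ) ^ (1 - 2 * s) + (2 : ℂ) ^ (1 - s)) * LSer chiNeg3 s *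
        LSer chi5 s := by
  have hzeta₁ := BinaryForm.hasSum_epsteinZeta (f := ⟨1, 0, 15⟩) (by decide) (by decide) hs
  have hzeta₃ := BinaryForm.hasSum_epsteinZeta (f := ⟨3, 0, 5⟩) (by decide) (by decide) hs
  have hvalue := (BinaryForm.LSeriesHasSum_diagDiff_epsteinZeta hs).unique
    (BinaryForm.LSeriesHasSum_diagDiff hs)
  simpa [BinaryForm.eval] using (hzeta₁.sub hzeta₃).tsum_eq.trans hvalue
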